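/- Higher-dimensional sufficient condition for NTK blow-up (one hidden layer, n > 1). Let a : ℝ^n → ℝ^{n×n} have C¹, bounded entries with bounded first partial derivatives, let σ : ℝ → ℝ be C² with σ'(y) > 0 for all y, and let u(x;θ) = Σ_{k=1}^d W¹_k σ(Σ_{l=1}^n W⁰_{kl} x_l + b⁰_k) + b¹ be a one-hidden-layer network on ℝ^n, with g_μ(x;θ) = σ(Σ_l W⁰_{μl} x_l + b⁰_μ). Define Lε φ(x) = −Σ_{i,j=1}^n [ (1/ε)(∂_{x_i} a_{ij})(x/ε) ∂_{x_j}φ(x) + a_{ij}(x/ε) ∂²_{x_i x_j}φ(x) ]. Fix a collocation point x ∈ ℝ^n and C > 0, let (ε_n) be positive reals with ε_n → 0, and let θ^{ε_n} be parameters with ‖θ^{ε_n}‖_∞ ≤ C. Suppose that for some index 1 ≤ μ ≤ d, (1/ε_n) |Σ_{i,j=1}^n (∂_{x_i} a_{ij})(x/ε_n) W^{(0),ε_n}_{μj}| → +∞ as n → ∞. Then (L^{ε_n} g_μ(x; θ^{ε_n}))² → +∞; consequently the diagonal NTK entry (1/N_c) Σ_{l=1}^{N_p} (∂_{θ_l}(L^{ε_n}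 u)(x;θ^{ε_n}))² at this collocation point, and hence the Frobenius norm of the NTK matrix, tends to +∞ along the sequence (ε_n). -/

import Mathlib

open Filter Set Topology

noncomputable section

/-- Partial derivative of `F : (I → ℝ) → ℝ` with respect to coordinate `i` at `θ`. -/
def pder {I : Type*} [DecidableEq I] (F : (I → ℝ) → ℝ) (θ : I → ℝ) (i : I) : ℝ :=
  deriv (fun s => F (Function.update θ i s)) (θ i)

/-- Partial derivative `∂_{x_i} φ(x)` of a function of `n` real variables. -/
def pdx {n : ℕ} (φ : (Fin n → ℝ) → ℝ) (x : Fin n → ℝ) (i : Fin n) : ℝ :=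
  deriv (fun s => φ (Function.update x i s)) (x i)

/-- The `n`-dimensional multiscale elliptic operator
`Lε φ(x) = -Σ_{i,j} [ (1/ε)(∂_{x_i} a_{ij})(x/ε) ∂_{x_j}φ(x) + a_{ij}(x/ε) ∂²_{x_i x_j}φ(x) ]`. -/
def LepsN {n : ℕ} (a : Fin n → Fin n → (Fin n → ℝ) → ℝ) (ε : ℝ)
    (φ : (Fin n → ℝ) → ℝ) (x : Fin n → ℝ) : ℝ :=
  -(∑ i, ∑ j,
      ((1 / ε) * pdx (a i j) (fun k => x k / ε) i * pdx φ x j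
        + a i j (fun k => x k / ε) * pdx (fun y => pdx φ y j) x i))

/-- Parameter index type for a one-hidden-layer network on `ℝ^n` of width `d`:
hidden weights `W⁰ ∈ ℝ^{d×n}`, hidden biases `b⁰ ∈ ℝ^d`, outer weights `W¹ ∈ ℝ^d`,
outer bias `b¹ ∈ ℝ`. -/
abbrev PIdx (d n : ℕ) := (Fin d × Fin n) ⊕ (Fin d ⊕ (Fin d ⊕ Unit))

/-- One-hidden-layer network on `ℝ^n`:
`u(x;θ) = Σ_k W¹_k σ(Σ_l W⁰_{kl} x_l + b⁰_k) + b¹`. -/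
def netN (σ : ℝ → ℝ) (d n : ℕ) (x : Fin n → ℝ) (θ : PIdx d n → ℝ) : ℝ :=
  (∑ k : Fin d, θ (Sum.inr (Sum.inr (Sum.inl k))) *
      σ ((∑ l, θ (Sum.inl (k, l)) * x l) + θ (Sum.inr (Sum.inl k))))
    + θ (Sum.inr (Sum.inr (Sum.inr ())))

/-- The neural tangent kernel matrix for the `n`-dimensional problem. -/
def ntkN {I : Type*} [Fintype I] [DecidableEq I] {n : ℕ}
    (a : Fin n → Fin n → (Fin n → ℝ) → ℝ) (ε : ℝ)
    (u : (Fin n → ℝ) → (I → ℝ) → ℝ) (lam : ℝ) {Nc Nb : ℕ}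
    (xs : Fin Nc → Fin n → ℝ) (ss : Fin Nb → Fin n → ℝ) (θ : I → ℝ) :
    Fin Nc ⊕ Fin Nb → Fin Nc ⊕ Fin Nb → ℝ
  | Sum.inl i, Sum.inl j => (1 / (Nc : ℝ)) *
      ∑ l, pder (fun θ' => LepsN a ε (fun x => u x θ') (xs i)) θ l *
        pder (fun θ' => LepsN a ε (fun x => u x θ') (xs j)) θ l
  | Sum.inl i, Sum.inr j => (lam / (Nb : ℝ)) *
      ∑ l, pder (fun θ' => LepsN a ε (fun x => u x θ') (xs i)) θ l *
        pder (fun θ' => u (ss j) θ') θ l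
  | Sum.inr i, Sum.inl j => (1 / (Nc : ℝ)) *
      ∑ l, pder (fun θ' => u (ss i) θ') θ l *
        pder (fun θ' => LepsN a ε (fun x => u x θ') (xs j)) θ l
  | Sum.inr i, Sum.inr j => (lam / (Nb : ℝ)) *
      ∑ l, pder (fun θ' => u (ss i) θ') θ l * pder (fun θ' => u (ss j) θ') θ l

/-- Frobenius norm of a square matrix. -/
def frob {α : Type*} [Fintype α] (K : α → α → ℝ) : ℝ :=
  Real.sqrt (∑ i, ∑ j, (K i j) ^ 2)

/-!
For a hidden unit `g` with preactivation `z = w · x + b`, the operator splits as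
`Lε g(x) = -(σ'(z) (1/ε) Σ_{ij} (∂_{x_i} a_{ij})(x/ε) w_j + σ''(z) Σ_{ij} a_{ij}(x/ε) w_i w_j)`.
Bounded parameters confine `z` to a compact set, on which `σ'` is bounded away from zero and `σ''`
is bounded. The second term therefore stays bounded and `|Lε g(x)|` inherits the divergence of the
first. Since `Lε` is linear and the network is affine in its outer weights, `Lε g_μ(x)` is the
derivative of `Lε u(x)` with respect to `W¹_μ`, so its square is one of the nonnegative summands of
the diagonal kernel entry, which the Frobenius norm dominates.
-/

section PartialDerivatives

variable {n : ℕ} {φ : (Fin n → ℝ) → ℝ} {x : Fin n → ℝ}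

lemma pdx_eq_fderiv (hφ : DifferentiableAt ℝ φ x) (i : Fin n) :
    pdx φ x i = fderiv ℝ φ x (Pi.single i 1) := by
  refine HasDerivAt.deriv ?_
  refine HasFDerivAt.comp_hasDerivAt (x i) ?_ (hasDerivAt_update x i (x i))
  simpa only [Function.update_eq_self] using hφ.hasFDerivAt

lemma differentiable_pdx (hφ : ContDiff ℝ 2 φ) (i : Fin n) :
    Differentiable ℝ (fun y => pdx φ y i) := by
  have hfderiv : Differentiable ℝ (fderiv ℝ φ) :=
    (hφ.fderiv_right (m := 1) (by norm_num)).differentiable one_ne_zero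
  simp_rw [fun y => pdx_eq_fderiv (hφ.differentiable two_ne_zero y) i]
  exact hfderiv.clm_apply (differentiable_const _)

variable {κ : Type*} {s : Finset κ} {ψ : κ → (Fin n → ℝ) → ℝ}

lemma pdx_sum_mul_add_const (hψ : ∀ k ∈ s, DifferentiableAt ℝ (ψ k) x) (c : κ → ℝ) (e : ℝ)
    (i : Fin n) :
    pdx (fun y => (∑ k ∈ s, c k * ψ k y) + e) x i = ∑ k ∈ s, c k * pdx (ψ k) x i := by
  have hsum : HasFDerivAt (fun y => (∑ k ∈ s, c k * ψ k y) + e)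
      (∑ k ∈ s, c k • fderiv ℝ (ψ k) x) x :=
    (HasFDerivAt.fun_sum fun k hk => (hψ k hk).hasFDerivAt.const_mul (c k)).add_const e
  rw [pdx_eq_fderiv hsum.differentiableAt, hsum.fderiv, sum_apply]
  exact Finset.sum_congr rfl fun k hk => by
    rw [pdx_eq_fderiv (hψ k hk), smul_apply, smul_eq_mul]

lemma LepsN_sum_mul_add_const (a : Fin n → Fin n → (Fin n → ℝ) → ℝ) (ε : ℝ)
    (hψ : ∀ k ∈ s, ContDiff ℝ 2 (ψ k)) (c : κ → ℝ) (e : ℝ) (x : Fin n → ℝ) :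
    LepsN a ε (fun y => (∑ k ∈ s, c k * ψ k y) + e) x = ∑ k ∈ s, c k * LepsN a ε (ψ k) x := by
  have hfirst (y : Fin n → ℝ) (j : Fin n) :
      pdx (fun y => (∑ k ∈ s, c k * ψ k y) + e) y j = ∑ k ∈ s, c k * pdx (ψ k) y j :=
    pdx_sum_mul_add_const (fun k hk => (hψ k hk).differentiable two_ne_zero y) c e j
  have hsecond (i j : Fin n) :
      pdx (fun y => ∑ k ∈ s, c k * pdx (ψ k) y j) x i
        = ∑ k ∈ s, c k * pdx (fun y => pdx (ψ k) y j) x i := by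
    simpa only [add_zero] using
      pdx_sum_mul_add_const (fun k hk => differentiable_pdx (hψ k hk) j x) c 0 i
  simp_rw [LepsN, hfirst, hsecond, mul_neg, Finset.sum_neg_distrib, Finset.mul_sum,
    ← Finset.sum_add_distrib]
  rw [Finset.sum_comm (s := s)]
  simp_rw [Finset.sum_comm (s := s)]
  congr! 4
  ring

end PartialDerivatives

section RidgeFunctions

variable {n : ℕ}

/-- The ridge function `y ↦ σ(w · y + b)`, i.e. a single neuron. Its partial derivatives are
multiples of ridge functions with the same `w` and `b`. -/
def ridge (σ : ℝ → ℝ) (w : Fin n → ℝ) (b : ℝ) (y : Fin n → ℝ) : ℝ :=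
  σ ((∑ l, w l * y l) + b)

variable {σ : ℝ → ℝ}

lemma contDiff_ridge {m : WithTop ℕ∞} (hσ : ContDiff ℝ m σ) (w : Fin n → ℝ) (b : ℝ) :
    ContDiff ℝ m (ridge σ w b) :=
  hσ.comp (by fun_prop)

lemma pdx_ridge (hσ : Differentiable ℝ σ) (w : Fin n → ℝ) (b : ℝ) (y : Fin n → ℝ) (j : Fin n) :
    pdx (ridge σ w b) y j = w j * ridge (deriv σ) w b y := by
  have hpre : HasDerivAt (fun s => (∑ l, w l * Function.update y j s l) + b) (w j) (y j) := by
    have hcoord := hasDerivAt_pi.1 (hasDerivAt_update y j (y j))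
    simpa [Pi.single_apply] using
      (HasDerivAt.fun_sum (u := Finset.univ) fun l _ => (hcoord l).const_mul (w l)).add_const b
  have hcomp := (hσ _).hasDerivAt.comp (y j) hpre
  rw [Function.update_eq_self, mul_comm] at hcomp
  exact hcomp.deriv

lemma pdx_pdx_ridge (hσ : Differentiable ℝ σ) (hσ' : Differentiable ℝ (deriv σ))
    (w : Fin n → ℝ) (b : ℝ) (y : Fin n → ℝ) (i j : Fin n) :
    pdx (fun y => pdx (ridge σ w b) y j) y i
      = w i * w j * ridge (deriv (deriv σ)) w b y := by
  simp_rw [fun y => pdx_ridge hσ w b y j]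
  have hridge : Differentiable ℝ (ridge (deriv σ) w b) := hσ'.comp (by fun_prop)
  rw [pdx_eq_fderiv ((hridge y).const_mul (w j)), fderiv_const_mul (hridge y),
    smul_apply, smul_eq_mul, ← pdx_eq_fderiv (hridge y), pdx_ridge hσ']
  ring

lemma LepsN_ridge (a : Fin n → Fin n → (Fin n → ℝ) → ℝ) (ε : ℝ) (hσ : Differentiable ℝ σ)
    (hσ' : Differentiable ℝ (deriv σ)) (w : Fin n → ℝ) (b : ℝ) (x : Fin n → ℝ) :
    LepsN a ε (ridge σ w b) x
      = -(ridge (deriv σ) w b x *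
            ((1 / ε) * ∑ i, ∑ j, pdx (a i j) (fun k => x k / ε) i * w j)
          + ridge (deriv (deriv σ)) w b x *
            ∑ i, ∑ j, a i j (fun k => x k / ε) * (w i * w j)) := by
  simp_rw [LepsN, pdx_pdx_ridge hσ hσ', pdx_ridge hσ, Finset.mul_sum, ← Finset.sum_add_distrib]
  congr! 3
  ring

end RidgeFunctions

lemma abs_sum_mul_add_le {ι : Type*} [Fintype ι] {w : ι → ℝ} {b C : ℝ}
    (hw : ∀ i, |w i| ≤ C) (hb : |b| ≤ C) (x : ι → ℝ) :
    |(∑ i, w i * x i) + b| ≤ C * (∑ i, |x i|) + C := by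
  have hterm (i : ι) : |w i * x i| ≤ C * |x i| := by
    rw [abs_mul]
    exact mul_le_mul_of_nonneg_right (hw i) (abs_nonneg _)
  calc |(∑ i, w i * x i) + b| ≤ |∑ i, w i * x i| + |b| := abs_add_le _ _
    _ ≤ (∑ i, |w i * x i|) + |b| := by gcongr; exact Finset.abs_sum_le_sum_abs _ _
    _ ≤ (∑ i, C * |x i|) + C := by gcongr; exact hterm _
    _ = C * (∑ i, |x i|) + C := by rw [Finset.mul_sum]

lemma abs_sum_sum_mul_mul_le {ι : Type*} [Fintype ι] {q : ι → ι → ℝ} {w : ι → ℝ} {A C : ℝ}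
    (hq : ∀ i j, |q i j| ≤ A) (hw : ∀ i, |w i| ≤ C) :
    |∑ i, ∑ j, q i j * (w i * w j)| ≤ (Fintype.card ι : ℝ) ^ 2 * (A * C ^ 2) := by
  have hterm (i j : ι) : |q i j * (w i * w j)| ≤ A * C ^ 2 := by
    have hA : 0 ≤ A := (abs_nonneg _).trans (hq i j)
    have hC : 0 ≤ C := (abs_nonneg _).trans (hw i)
    rw [abs_mul, abs_mul, sq]
    exact mul_le_mul (hq i j) (mul_le_mul (hw i) (hw j) (abs_nonneg _) hC) (by positivity) hA
  calc |∑ i, ∑ j, q i j * (w i * w j)|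
      ≤ ∑ i, ∑ j, |q i j * (w i * w j)| :=
        (Finset.abs_sum_le_sum_abs _ _).trans <|
          Finset.sum_le_sum fun _ _ => Finset.abs_sum_le_sum_abs _ _
    _ ≤ ∑ _i : ι, ∑ _j : ι, A * C ^ 2 := by gcongr; exact hterm _ _
    _ = (Fintype.card ι : ℝ) ^ 2 * (A * C ^ 2) := by
        simp only [Finset.sum_const, Finset.card_univ, nsmul_eq_mul]; ring

lemma le_abs_LepsN_ridge {n : ℕ} {σ : ℝ → ℝ} {a : Fin n → Fin n → (Fin n → ℝ) → ℝ} {ε : ℝ}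
    {w x : Fin n → ℝ} {b c M A C : ℝ} (hσ : Differentiable ℝ σ)
    (hσ' : Differentiable ℝ (deriv σ)) (hc : 0 ≤ c) (hlower : c ≤ |ridge (deriv σ) w b x|)
    (hupper : |ridge (deriv (deriv σ)) w b x| ≤ M)
    (ha : ∀ i j, |a i j (fun k => x k / ε)| ≤ A) (hw : ∀ i, |w i| ≤ C) :
    c * ((1 / ε) * |∑ i, ∑ j, pdx (a i j) (fun k => x k / ε) i * w j|)
        - M * ((n : ℝ) ^ 2 * (A * C ^ 2))
      ≤ |LepsN a ε (ridge σ w b) x| := by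
  rw [LepsN_ridge a ε hσ hσ', abs_neg]
  set S := ∑ i, ∑ j, pdx (a i j) (fun k => x k / ε) i * w j
  set Q := ∑ i, ∑ j, a i j (fun k => x k / ε) * (w i * w j)
  have hdrift : c * ((1 / ε) * |S|) ≤ |ridge (deriv σ) w b x * ((1 / ε) * S)| := by
    calc c * ((1 / ε) * |S|) ≤ c * |(1 / ε) * S| := by
          rw [abs_mul]; gcongr; exact le_abs_self _
      _ ≤ |ridge (deriv σ) w b x| * |(1 / ε) * S| := by gcongr
      _ = |ridge (deriv σ) w b x * ((1 / ε) * S)| := (abs_mul _ _).symm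
  have hdiffusion : |ridge (deriv (deriv σ)) w b x * Q| ≤ M * ((n : ℝ) ^ 2 * (A * C ^ 2)) := by
    have hQ : |Q| ≤ (n : ℝ) ^ 2 * (A * C ^ 2) := by
      simpa only [Fintype.card_fin] using abs_sum_sum_mul_mul_le ha hw
    rw [abs_mul]
    exact mul_le_mul hupper hQ (abs_nonneg _) ((abs_nonneg _).trans hupper)
  calc c * ((1 / ε) * |S|) - M * ((n : ℝ) ^ 2 * (A * C ^ 2))
      ≤ |ridge (deriv σ) w b x * ((1 / ε) * S)| - |ridge (deriv (deriv σ)) w b x * Q| :=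
        sub_le_sub hdrift hdiffusion
    _ ≤ |ridge (deriv σ) w b x * ((1 / ε) * S) + ridge (deriv (deriv σ)) w b x * Q| :=
        abs_sub_abs_le_abs_add _ _

lemma tendsto_abs_LepsN_ridge_atTop {n : ℕ} {ι : Type*} {l : Filter ι}
    {a : Fin n → Fin n → (Fin n → ℝ) → ℝ} {A : ℝ} (ha : ∀ i j y, |a i j y| ≤ A)
    {σ : ℝ → ℝ} (hσ : ContDiff ℝ 2 σ) (hσ' : ∀ y, deriv σ y ≠ 0) {x : Fin n → ℝ}
    {ε : ι → ℝ} {w : ι → Fin n → ℝ} {b : ι → ℝ} {C : ℝ}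
    (hw : ∀ m j, |w m j| ≤ C) (hb : ∀ m, |b m| ≤ C)
    (hdrift : Tendsto (fun m => (1 / ε m) *
      |∑ i, ∑ j, pdx (a i j) (fun k => x k / ε m) i * w m j|) l atTop) :
    Tendsto (fun m => |LepsN a (ε m) (ridge σ (w m) (b m)) x|) l atTop := by
  have hderiv : ContDiff ℝ 1 (deriv σ) := ContDiff.iterate_deriv' 1 1 hσ
  set R := C * (∑ i, |x i|) + C
  have hmem (m : ι) : (∑ i, w m i * x i) + b m ∈ Icc (-R) R :=
    abs_le.1 (abs_sum_mul_add_le (hw m) (hb m) x)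
  obtain ⟨c, hc, hlower⟩ : ∃ c, 0 < c ∧ ∀ z ∈ Icc (-R) R, c ≤ |deriv σ z| :=
    isCompact_Icc.exists_forall_le' hderiv.continuous.abs.continuousOn
      fun z _ => abs_pos.2 (hσ' z)
  obtain ⟨M, hupper⟩ : ∃ M, ∀ z ∈ Icc (-R) R, |deriv (deriv σ) z| ≤ M :=
    isCompact_Icc.exists_bound_of_continuousOn (hderiv.continuous_deriv le_rfl).continuousOn
  refine tendsto_atTop_mono (fun m => le_abs_LepsN_ridge (hσ.differentiable two_ne_zero)
    (hderiv.differentiable one_ne_zero) hc.le (hlower _ (hmem m)) (hupper _ (hmem m))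
    (fun i j => ha i j _) (hw m)) ?_
  exact tendsto_atTop_add_const_right l _ (hdrift.const_mul_atTop hc)

section Network

variable {d n : ℕ} {σ : ℝ → ℝ}

/-- The parameter index of the outer weight `W¹_k`. -/
abbrev outerWeight (k : Fin d) : PIdx d n := Sum.inr (Sum.inr (Sum.inl k))

/-- The hidden unit `g_k(·; θ)`, a ridge function with weights `W⁰_k` and bias `b⁰_k`. -/
def hiddenUnit (σ : ℝ → ℝ) (θ : PIdx d n → ℝ) (k : Fin d) : (Fin n → ℝ) → ℝ :=
  ridge σ (fun l => θ (Sum.inl (k, l))) (θ (Sum.inr (Sum.inl k)))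

lemma hiddenUnit_update_outerWeight (θ : PIdx d n → ℝ) (k μ : Fin d) (s : ℝ) :
    hiddenUnit σ (Function.update θ (outerWeight μ) s) k = hiddenUnit σ θ k := by
  simp [hiddenUnit]

lemma LepsN_netN (a : Fin n → Fin n → (Fin n → ℝ) → ℝ) (ε : ℝ) (hσ : ContDiff ℝ 2 σ)
    (θ : PIdx d n → ℝ) (x : Fin n → ℝ) :
    LepsN a ε (fun y => netN σ d n y θ) x
      = ∑ k, θ (outerWeight k) * LepsN a ε (hiddenUnit σ θ k) x :=
  LepsN_sum_mul_add_const a ε (fun _ _ => contDiff_ridge hσ _ _) _ _ x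

lemma pder_LepsN_netN_outerWeight (a : Fin n → Fin n → (Fin n → ℝ) → ℝ) (ε : ℝ)
    (hσ : ContDiff ℝ 2 σ) (θ : PIdx d n → ℝ) (x : Fin n → ℝ) (μ : Fin d) :
    pder (fun θ' => LepsN a ε (fun y => netN σ d n y θ') x) θ (outerWeight μ)
      = LepsN a ε (hiddenUnit σ θ μ) x := by
  simp_rw [pder, LepsN_netN a ε hσ, hiddenUnit_update_outerWeight]
  have hcoord := hasDerivAt_pi.1 (hasDerivAt_update θ (outerWeight μ) (θ (outerWeight μ)))
  have hsum := HasDerivAt.fun_sum (u := Finset.univ) fun k _ =>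
    (hcoord (outerWeight k)).mul_const (LepsN a ε (hiddenUnit σ θ k) x)
  simpa [Pi.single_apply] using hsum.deriv

lemma sq_LepsN_hiddenUnit_le (a : Fin n → Fin n → (Fin n → ℝ) → ℝ) (ε : ℝ)
    (hσ : ContDiff ℝ 2 σ) (θ : PIdx d n → ℝ) (x : Fin n → ℝ) (μ : Fin d) :
    LepsN a ε (hiddenUnit σ θ μ) x ^ 2
      ≤ ∑ p, pder (fun θ' => LepsN a ε (fun y => netN σ d n y θ') x) θ p ^ 2 := by
  rw [← pder_LepsN_netN_outerWeight a ε hσ]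
  exact Finset.single_le_sum
    (f := fun p => pder (fun θ' => LepsN a ε (fun y => netN σ d n y θ') x) θ p ^ 2)
    (fun _ _ => sq_nonneg _) (Finset.mem_univ _)

end Network

lemma le_frob {α : Type*} [Fintype α] (K : α → α → ℝ) (i j : α) : K i j ≤ frob K := by
  refine Real.le_sqrt_of_sq_le ?_
  calc K i j ^ 2 ≤ ∑ j, K i j ^ 2 :=
        Finset.single_le_sum (f := fun j => K i j ^ 2) (fun _ _ => sq_nonneg _)
          (Finset.mem_univ j)
    _ ≤ ∑ i, ∑ j, K i j ^ 2 :=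
        Finset.single_le_sum (f := fun i => ∑ j, K i j ^ 2)
          (fun _ _ => Finset.sum_nonneg fun _ _ => sq_nonneg _) (Finset.mem_univ i)

lemma ntkN_inl_self {I : Type*} [Fintype I] [DecidableEq I] {n Nc Nb : ℕ}
    (a : Fin n → Fin n → (Fin n → ℝ) → ℝ) (ε : ℝ) (u : (Fin n → ℝ) → (I → ℝ) → ℝ) (lam : ℝ)
    (xs : Fin Nc → Fin n → ℝ) (ss : Fin Nb → Fin n → ℝ) (θ : I → ℝ) (α : Fin Nc) :
    ntkN a ε u lam xs ss θ (Sum.inl α) (Sum.inl α)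
      = (1 / (Nc : ℝ)) *
        ∑ p, pder (fun θ' => LepsN a ε (fun x => u x θ') (xs α)) θ p ^ 2 := by
  simp only [ntkN, sq]

theorem ntk_blowup_higher_dimensional_general {n d Nc Nb : ℕ} {ι : Type*} {l : Filter ι}
    {a : Fin n → Fin n → (Fin n → ℝ) → ℝ} (_ha : ∀ i j, Differentiable ℝ (a i j))
    {A : ℝ} (habd : ∀ i j y, |a i j y| ≤ A)
    {σ : ℝ → ℝ} (hσ : ContDiff ℝ 2 σ) (hσ' : ∀ y, deriv σ y ≠ 0)
    (lam : ℝ) (xs : Fin Nc → Fin n → ℝ) (ss : Fin Nb → Fin n → ℝ) (α : Fin Nc)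
    {ε : ι → ℝ} {Θ : ι → PIdx d n → ℝ} {μ : Fin d} {C : ℝ}
    (hw : ∀ m j, |Θ m (Sum.inl (μ, j))| ≤ C) (hb : ∀ m, |Θ m (Sum.inr (Sum.inl μ))| ≤ C)
    (hdrift : Tendsto (fun m => (1 / ε m) *
      |∑ i, ∑ j, pdx (a i j) (fun k => xs α k / ε m) i * Θ m (Sum.inl (μ, j))|) l atTop) :
    Tendsto (fun m => LepsN a (ε m) (hiddenUnit σ (Θ m) μ) (xs α) ^ 2) l atTop
    ∧ Tendsto (fun m => (1 / (Nc : ℝ)) *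
        ∑ p, pder (fun θ' => LepsN a (ε m) (fun y => netN σ d n y θ') (xs α)) (Θ m) p ^ 2)
      l atTop
    ∧ Tendsto (fun m => frob (ntkN a (ε m) (netN σ d n) lam xs ss (Θ m))) l atTop := by
  have habs : Tendsto (fun m => |LepsN a (ε m) (hiddenUnit σ (Θ m) μ) (xs α)|) l atTop :=
    tendsto_abs_LepsN_ridge_atTop habd hσ hσ' hw hb hdrift
  have hunit : Tendsto (fun m => LepsN a (ε m) (hiddenUnit σ (Θ m) μ) (xs α) ^ 2) l atTop := by
    simpa only [Function.comp_def, sq_abs] using (tendsto_pow_atTop two_ne_zero).comp habs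
  have hNc : (0 : ℝ) < 1 / Nc := one_div_pos.2 (Nat.cast_pos.2 α.pos)
  have hdiag := (tendsto_atTop_mono
    (fun m => sq_LepsN_hiddenUnit_le a (ε m) hσ (Θ m) (xs α) μ) hunit).const_mul_atTop hNc
  refine ⟨hunit, hdiag, tendsto_atTop_mono (fun m => ?_) hdiag⟩
  exact (ntkN_inl_self a (ε m) (netN σ d n) lam xs ss (Θ m) α).ge.trans (le_frob _ _ _)

/-- **Higher-dimensional sufficient condition for NTK blow-up (one hidden layer, n > 1).**
If the uniformly bounded parameters `θ^{ε_n}` are such that for some hidden unit `μ` the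
quantity `(1/ε_n)|Σ_{i,j}(∂_{x_i}a_{ij})(x/ε_n) W⁰_{μj}|` diverges, then
`(L^{ε_n} g_μ(x;θ^{ε_n}))² → ∞`, so the diagonal NTK entry at the collocation point `x` and
hence the Frobenius norm of the NTK matrix tend to `+∞` along the sequence `(ε_n)`. -/
theorem ntk_blowup_higher_dimensional
    {n d Nc Nb : ℕ} (hn : 1 < n) (hd : 0 < d) (hNc : 0 < Nc)
    (a : Fin n → Fin n → (Fin n → ℝ) → ℝ) (ha : ∀ i j, ContDiff ℝ 1 (a i j))
    (Abd : ℝ) (hAbd : 0 < Abd)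
    (habd : ∀ i j y, |a i j y| ≤ Abd)
    (hadbd : ∀ i j k y, |pdx (a i j) y k| ≤ Abd)
    (σ : ℝ → ℝ) (hσ : ContDiff ℝ 2 σ) (hσ' : ∀ y, 0 < deriv σ y)
    (lam : ℝ) (xs : Fin Nc → Fin n → ℝ) (ss : Fin Nb → Fin n → ℝ) (α : Fin Nc)
    (C : ℝ) (hC : 0 < C)
    (ε : ℕ → ℝ) (hεpos : ∀ m, 0 < ε m) (hε0 : Tendsto ε atTop (𝓝 0))
    (Θ : ℕ → PIdx d n → ℝ) (hbd : ∀ m, ‖Θ m‖ ≤ C)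
    (μ : Fin d)
    (hkey : Tendsto (fun m => (1 / ε m) *
        |∑ i, ∑ j, pdx (a i j) (fun k => xs α k / ε m) i * Θ m (Sum.inl (μ, j))|)
      atTop atTop) :
    Tendsto (fun m =>
        (LepsN a (ε m)
          (fun y => σ ((∑ l, Θ m (Sum.inl (μ, l)) * y l) + Θ m (Sum.inr (Sum.inl μ))))
          (xs α)) ^ 2) atTop atTop
    ∧ Tendsto (fun m => (1 / (Nc : ℝ)) *
        ∑ l : PIdx d n,
          (pder (fun θ' => LepsN a (ε m) (fun y => netN σ d n y θ') (xs α)) (Θ m) l) ^ 2)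
      atTop atTop
    ∧ Tendsto (fun m => frob (ntkN a (ε m) (netN σ d n) lam xs ss (Θ m))) atTop atTop := by
  have hΘ (m : ℕ) (p : PIdx d n) : |Θ m p| ≤ C := (norm_le_pi_norm (Θ m) p).trans (hbd m)
  exact ntk_blowup_higher_dimensional_general (fun i j => (ha i j).differentiable one_ne_zero)
    habd hσ (fun y => (hσ' y).ne') lam xs ss α (fun m _ => hΘ m _) (fun m => hΘ m _) hkey

end
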